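/- Let −8 < ξ < −4 and define f : ℂ∖{0} → ℂ by f(z) = (1/2)(z − 1/z)·(ξ + (z + 1/z)² + 2 − (z + 1/z)). Then the set { z ∈ ℝ : z ≠ 0 and f′(z) = 0 } consists of exactly two points ξ₂, ξ₁ satisfying 0 < ξ₂ < 1 < ξ₁ and ξ₁·ξ₂ = 1. -/

import Mathlib

/-!
Put `s = z + 1/z`. Since `z s' = z - 1/z` and `z (z - 1/z)' = s`, one gets
`2 z f'(z) = g(s)` with the cubic `g(s) = 3 s³ - 2 s² + (ξ - 6) s + 4`, so the stationary points
are the real `z ≠ 0` with `g(z + 1/z) = 0`. A real `z ≠ 0` has `s ≥ 2` (if `z > 0`) or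
`s ≤ -2` (if `z < 0`). The bound `-8 < ξ` gives `g < 0` on `(-∞, -2]` (`cubic_neg`) and injectivity
of `g` on `[2, ∞)` (`cubic_injOn`); the bound `ξ < -4` gives `g(2) = 8 + 2ξ < 0`, so the
intermediate value theorem yields a zero `a > 1` of `z ↦ g(z + 1/z)`. Hence the stationary points
are the solutions of `z + 1/z = a + 1/a`, which are `a` and `1/a`.
-/

/-- The phase function of the defocusing Hirota equation with α = β = 1. -/
noncomputable def phase (ξ : ℝ) (z : ℂ) : ℂ :=
  (1 / 2) * (z - 1 / z) * ((ξ : ℂ) + (z + 1 / z) ^ 2 + 2 - (z + 1 / z))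

/-- The cubic `g` with `2 z f'(z) = g(z + 1/z)`. -/
noncomputable def cubic (ξ s : ℝ) : ℝ := 3 * s ^ 3 - 2 * s ^ 2 + (ξ - 6) * s + 4

lemma deriv_phase (ξ z : ℝ) (hz : z ≠ 0) :
    deriv (phase ξ) (z : ℂ) = ((cubic ξ (z + 1 / z) / (2 * z) : ℝ) : ℂ) := by
  have hz' : (z : ℂ) ≠ 0 := by exact_mod_cast hz
  have hinv : HasDerivAt (fun w : ℂ => 1 / w) (-((z : ℂ) ^ 2)⁻¹) (z : ℂ) := by
    simpa only [one_div] using hasDerivAt_inv hz'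
  have hs := (hasDerivAt_id (z : ℂ)).add hinv
  have hd := ((hasDerivAt_id (z : ℂ)).sub hinv).const_mul (1 / 2 : ℂ)
  have h := hd.mul ((((hs.pow 2).const_add (ξ : ℂ)).add_const 2).sub hs)
  have h' : deriv (phase ξ) (z : ℂ) = _ := h.deriv
  rw [h']
  simp only [cubic, Pi.add_apply, Pi.sub_apply, Pi.pow_apply, id]
  push_cast
  field_simp
  ring

lemma cubic_neg {ξ s : ℝ} (hξ : -8 < ξ) (hs : s ≤ -2) : cubic ξ s < 0 := by
  -- `g(s) = (s + 2)(3 s² - 8 s + 2) + (ξ + 8) s`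
  have h1 : (s + 2) * (3 * s ^ 2 - 8 * s + 2) ≤ 0 :=
    mul_nonpos_of_nonpos_of_nonneg (by linarith) (by nlinarith)
  have h2 : (ξ + 8) * s < 0 := mul_neg_of_pos_of_neg (by linarith) (by linarith)
  unfold cubic
  linarith

lemma cubic_injOn {ξ : ℝ} (hξ : -8 < ξ) : Set.InjOn (cubic ξ) (Set.Ici 2) := by
  intro s hs t ht h
  rw [Set.mem_Ici] at hs ht
  have hfac : (s - t) * (3 * (s ^ 2 + s * t + t ^ 2) - 2 * (s + t) + ξ - 6) = 0 := by
    unfold cubic at h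
    linear_combination h
  rcases mul_eq_zero.mp hfac with h0 | h0
  · linarith
  · nlinarith [mul_nonneg (sub_nonneg.2 hs) (sub_nonneg.2 ht)]

lemma two_le_add_one_div {z : ℝ} (hz : 0 < z) : 2 ≤ z + 1 / z := by
  have h : z + 1 / z - 2 = (z - 1) ^ 2 / z := by
    field_simp
    ring
  have : 0 ≤ (z - 1) ^ 2 / z := by positivity
  linarith

lemma exists_cubic_zero {ξ : ℝ} (hξ₁ : -8 < ξ) (hξ₂ : ξ < -4) :
    ∃ a : ℝ, 1 < a ∧ cubic ξ (a + 1 / a) = 0 := by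
  have hc : ContinuousOn (fun z : ℝ => cubic ξ (z + 1 / z)) (Set.Icc 1 10) := by
    have hs : ContinuousOn (fun z : ℝ => z + 1 / z) (Set.Icc 1 10) :=
      continuousOn_id.add (continuousOn_const.div continuousOn_id fun z hz =>
        (zero_lt_one.trans_le hz.1).ne')
    have hg : Continuous (cubic ξ) := by
      unfold cubic
      fun_prop
    exact hg.comp_continuousOn hs
  obtain ⟨a, ha, h0⟩ := intermediate_value_Ioo (by norm_num) hc
    (show (0 : ℝ) ∈ _ by
      constructor <;> norm_num [cubic] <;> linarith)
  exact ⟨a, ha.1, h0⟩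

/-- For −8 < ξ < −4 the real stationary phase points are exactly two points ξ₂, ξ₁ with
0 < ξ₂ < 1 < ξ₁ and ξ₁ξ₂ = 1. -/
theorem stationary_points_case3 (ξ : ℝ) (hξ₁ : -8 < ξ) (hξ₂ : ξ < -4) :
    ∃ ξ₁ ξ₂ : ℝ, 0 < ξ₂ ∧ ξ₂ < 1 ∧ 1 < ξ₁ ∧ ξ₁ * ξ₂ = 1 ∧
      {z : ℝ | z ≠ 0 ∧ deriv (phase ξ) (z : ℂ) = 0} = {ξ₂, ξ₁} := by
  obtain ⟨a, ha, hga⟩ := exists_cubic_zero hξ₁ hξ₂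
  have ha0 : 0 < a := by linarith
  refine ⟨a, 1 / a, by positivity, (div_lt_one ha0).2 ha, ha, mul_one_div_cancel ha0.ne', ?_⟩
  ext z
  simp only [Set.mem_ofPred_eq, Set.mem_insert_iff, Set.mem_singleton_iff]
  have hiff : z ≠ 0 → (deriv (phase ξ) (z : ℂ) = 0 ↔ cubic ξ (z + 1 / z) = 0) := by
    intro hz
    rw [deriv_phase ξ z hz, Complex.ofReal_eq_zero, div_eq_zero_iff]
    simp [hz]
  constructor
  · rintro ⟨hz, h⟩
    rw [hiff hz] at h
    rcases lt_or_gt_of_ne hz with hneg | hpos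
    · have h2 := two_le_add_one_div (neg_pos.2 hneg)
      rw [one_div_neg_eq_neg_one_div] at h2
      exact absurd h (cubic_neg hξ₁ (by linarith)).ne
    · have hs : z + 1 / z = a + 1 / a := cubic_injOn hξ₁ (two_le_add_one_div hpos)
        (two_le_add_one_div ha0) (h.trans hga.symm)
      have hfac : (z * a - 1) * (z - a) = 0 := by
        field_simp at hs
        linear_combination hs
      rcases mul_eq_zero.mp hfac with h0 | h0
      · left
        rw [eq_div_iff ha0.ne']
        linarith
      · right
        linarith
  · rintro (rfl | rfl)
    · have hne : (1 / a) ≠ 0 := by positivity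
      refine ⟨hne, (hiff hne).2 ?_⟩
      rwa [one_div_one_div, add_comm]
    · exact ⟨ha0.ne', (hiff ha0.ne').2 hga⟩
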